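/- Let (lₙ), (ω₁ₙ), (ω₂ₙ) be sequences of positive real numbers with lₙ → 0, and let (dₙ), (bₙ) be sequences of nonnegative real numbers such that for every n, cosh dₙ = (cosh(ω₂ₙ/2) + cosh(lₙ/2)·cosh(ω₁ₙ/2)) / (sinh(lₙ/2)·sinh(ω₁ₙ/2)) and cosh(bₙ/2) = sinh(dₙ)·sinh(ω₁ₙ/2). Then the sequence bₙ − 2·log(1/lₙ) − max(ω₁ₙ, ω₂ₙ) is bounded. -/

import Mathlib

/-!
Write `L`, `A`, `B`, `β` for half the lengths `l`, `ω₁`, `ω₂`, `b`. Eliminating `d` from the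
hexagon and pentagon formulae expresses `(cosh β * sinh L) ^ 2` as
`cosh A ^ 2 + cosh B ^ 2 + 2 * cosh A * cosh B * cosh L + sinh L ^ 2`, which is symmetric in `A`
and `B` and lies between the squares of `cosh (max A B)` and `2 * cosh L * cosh (max A B)`. Taking
logarithms finishes the proof, because `log (cosh x)` is within `log 2` of `|x|`, and
`log (sinh L)` is within `L` of `log L`. For full lengths the errors add up to at most
`l + 6 * log 2`, and a convergent sequence `l` is bounded.
-/

open Filter Real

lemma cosh_le_exp_abs (x : ℝ) : cosh x ≤ exp |x| := by
  have h_cosh_add_sinh := cosh_add_sinh |x|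
  have h_sinh : 0 ≤ sinh |x| := sinh_nonneg_iff.2 (abs_nonneg x)
  rw [cosh_abs] at h_cosh_add_sinh
  linarith

lemma log_cosh_le_abs (x : ℝ) : log (cosh x) ≤ |x| :=
  (log_le_iff_le_exp (cosh_pos x)).2 (cosh_le_exp_abs x)

lemma abs_sub_log_two_le_log_cosh (x : ℝ) : |x| - log 2 ≤ log (cosh x) := by
  have h_exp : exp |x| ≤ 2 * cosh x := by
    linarith [exp_abs_le x, cosh_eq x]
  have h_log := (le_log_iff_exp_le (by positivity)).2 h_exp
  rw [log_mul two_ne_zero (cosh_pos x).ne'] at h_log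
  linarith

lemma sinh_le_mul_exp (x : ℝ) : sinh x ≤ x * exp x := by
  have h_tangent : 1 - 2 * x ≤ exp (-(2 * x)) := one_sub_le_exp_neg (2 * x)
  calc sinh x = exp x * (1 - exp (-(2 * x))) / 2 := by
        rw [sinh_eq, mul_sub, ← exp_add]
        ring_nf
    _ ≤ exp x * (2 * x) / 2 := by gcongr; linarith
    _ = x * exp x := by ring

lemma log_le_log_sinh {x : ℝ} (hx : 0 < x) : log x ≤ log (sinh x) :=
  log_le_log hx (self_le_sinh_iff.2 hx.le)

lemma log_sinh_le_log_add {x : ℝ} (hx : 0 < x) : log (sinh x) ≤ log x + x := by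
  have h_log := log_le_log (sinh_pos_iff.2 hx) (sinh_le_mul_exp x)
  rwa [log_mul hx.ne' (exp_pos x).ne', log_exp] at h_log

lemma cosh_max {x y : ℝ} (hx : 0 ≤ x) (hy : 0 ≤ y) :
    cosh (max x y) = max (cosh x) (cosh y) :=
  cosh_strictMonoOn.monotoneOn.map_max hx hy

section HalfLengths

variable {L A B d β : ℝ}

lemma sq_cosh_mul_sinh_of_hexagon_pentagon (hL : L ≠ 0) (hA : A ≠ 0)
    (hhex : cosh d = (cosh B + cosh L * cosh A) / (sinh L * sinh A))
    (hpent : cosh β = sinh d * sinh A) :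
    (cosh β * sinh L) ^ 2 =
      cosh A ^ 2 + cosh B ^ 2 + 2 * cosh A * cosh B * cosh L + sinh L ^ 2 := by
  have h_denom : sinh L * sinh A ≠ 0 := mul_ne_zero (sinh_ne_zero.2 hL) (sinh_ne_zero.2 hA)
  have hhex' : cosh d * (sinh L * sinh A) = cosh B + cosh L * cosh A :=
    (eq_div_iff h_denom).1 hhex
  calc (cosh β * sinh L) ^ 2
      = (cosh d * (sinh L * sinh A)) ^ 2 - (sinh L * sinh A) ^ 2 := by
        rw [hpent, mul_pow (cosh d), cosh_sq d]
        ring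
    _ = (cosh B + cosh L * cosh A) ^ 2 - sinh L ^ 2 * (cosh A ^ 2 - 1) := by
        rw [hhex', mul_pow, sinh_sq A]
    _ = cosh A ^ 2 + cosh B ^ 2 + 2 * cosh A * cosh B * cosh L + sinh L ^ 2 := by
        rw [sinh_sq]
        ring

lemma cosh_max_le_cosh_mul_sinh (hL : 0 < L) (hA : 0 < A) (hB : 0 ≤ B)
    (hhex : cosh d = (cosh B + cosh L * cosh A) / (sinh L * sinh A))
    (hpent : cosh β = sinh d * sinh A) :
    cosh (max A B) ≤ cosh β * sinh L := by
  have h_cross : 0 < 2 * cosh A * cosh B * cosh L := by positivity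
  have h_sq := sq_cosh_mul_sinh_of_hexagon_pentagon hL.ne' hA.ne' hhex hpent
  rw [cosh_max hA.le hB]
  apply max_le <;> refine le_of_sq_le_sq ?_ (by positivity) <;> nlinarith

lemma cosh_mul_sinh_le_two_mul_cosh_mul_cosh_max (hL : 0 < L) (hA : 0 < A) (hB : 0 ≤ B)
    (hhex : cosh d = (cosh B + cosh L * cosh A) / (sinh L * sinh A))
    (hpent : cosh β = sinh d * sinh A) :
    cosh β * sinh L ≤ 2 * cosh L * cosh (max A B) := by
  rw [cosh_max hA.le hB]
  set m := max (cosh A) (cosh B)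
  have hAm : cosh A ≤ m := le_max_left ..
  have hBm : cosh B ≤ m := le_max_right ..
  have hm : 1 ≤ m := (one_le_cosh A).trans hAm
  have hL_one : 1 ≤ cosh L := one_le_cosh L
  have h_sinh : sinh L ^ 2 ≤ m ^ 2 * (cosh L ^ 2 - 1) := by
    rw [← sinh_sq]
    exact le_mul_of_one_le_left (sq_nonneg _) (one_le_pow₀ hm)
  refine le_of_sq_le_sq ?_ (by positivity)
  calc (cosh β * sinh L) ^ 2
      = cosh A ^ 2 + cosh B ^ 2 + 2 * cosh A * cosh B * cosh L + sinh L ^ 2 :=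
        sq_cosh_mul_sinh_of_hexagon_pentagon hL.ne' hA.ne' hhex hpent
    _ ≤ m ^ 2 + m ^ 2 + 2 * m * m * cosh L + m ^ 2 * (cosh L ^ 2 - 1) := by gcongr
    _ = ((1 + cosh L) * m) ^ 2 := by ring
    _ ≤ (2 * cosh L * m) ^ 2 := by
        gcongr
        linarith

lemma abs_add_log_sub_max_le_of_hexagon_pentagon (hL : 0 < L) (hA : 0 < A) (hB : 0 ≤ B)
    (hβ : 0 ≤ β) (hhex : cosh d = (cosh B + cosh L * cosh A) / (sinh L * sinh A))
    (hpent : cosh β = sinh d * sinh A) :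
    |β + log L - max A B| ≤ L + 2 * log 2 := by
  have h_lower : log (cosh (max A B)) ≤ log (cosh β) + log (sinh L) := by
    rw [← log_mul (by positivity) (by positivity)]
    exact log_le_log (cosh_pos _) (cosh_max_le_cosh_mul_sinh hL hA hB hhex hpent)
  have h_upper : log (cosh β) + log (sinh L) ≤ log 2 + log (cosh L) + log (cosh (max A B)) := by
    rw [← log_mul (by positivity) (by positivity), ← log_mul two_ne_zero (by positivity),
      ← log_mul (by positivity) (by positivity)]
    exact log_le_log (by positivity)
      (cosh_mul_sinh_le_two_mul_cosh_mul_cosh_max hL hA hB hhex hpent)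
  have h_log_cosh {x : ℝ} (hx : 0 ≤ x) : x - log 2 ≤ log (cosh x) ∧ log (cosh x) ≤ x := by
    simpa only [abs_of_nonneg hx] using
      And.intro (abs_sub_log_two_le_log_cosh x) (log_cosh_le_abs x)
  obtain ⟨-, hL_upper⟩ := h_log_cosh hL.le
  obtain ⟨hβ_lower, hβ_upper⟩ := h_log_cosh hβ
  obtain ⟨hM_lower, hM_upper⟩ := h_log_cosh (hB.trans (le_max_right A B))
  have h_log_two : 0 < log 2 := log_pos one_lt_two
  rw [abs_le]
  constructor <;> linarith [log_le_log_sinh hL, log_sinh_le_log_add hL]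

end HalfLengths

theorem self_perpendicular_asymptotics_general {l ω₁ ω₂ d b : ℝ}
    (hl : 0 < l) (hω₁ : 0 < ω₁) (hω₂ : 0 ≤ ω₂) (hb : 0 ≤ b)
    (hhex : cosh d =
      (cosh (ω₂ / 2) + cosh (l / 2) * cosh (ω₁ / 2)) / (sinh (l / 2) * sinh (ω₁ / 2)))
    (hpent : cosh (b / 2) = sinh d * sinh (ω₁ / 2)) :
    |b - 2 * log (1 / l) - max ω₁ ω₂| ≤ l + 6 * log 2 := by
  have h_half : |b / 2 + log (l / 2) - max (ω₁ / 2) (ω₂ / 2)| ≤ l / 2 + 2 * log 2 :=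
    abs_add_log_sub_max_le_of_hexagon_pentagon (by positivity) (by positivity) (by positivity)
      (by positivity) hhex hpent
  have h_log_two : 0 < log 2 := log_pos one_lt_two
  rw [log_div hl.ne' two_ne_zero, max_div_div_right zero_le_two, abs_le] at h_half
  rw [one_div, log_inv, abs_le]
  constructor <;> linarith

/-- If `lₙ → 0` and `dₙ, bₙ ≥ 0` satisfy the hexagon and pentagon formulae for a
pair of pants with boundary lengths `lₙ, ω₁ₙ, ω₂ₙ`, then
`bₙ = 2·log(1/lₙ) + max(ω₁ₙ, ω₂ₙ) + O(1)`. -/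
theorem self_perpendicular_asymptotics
    (l ω₁ ω₂ : ℕ → ℝ) (hl : ∀ n, 0 < l n) (hω₁ : ∀ n, 0 < ω₁ n) (hω₂ : ∀ n, 0 < ω₂ n)
    (hl0 : Tendsto l atTop (nhds 0))
    (d b : ℕ → ℝ) (hd : ∀ n, 0 ≤ d n) (hb : ∀ n, 0 ≤ b n)
    (hhex : ∀ n, Real.cosh (d n) =
      (Real.cosh (ω₂ n / 2) + Real.cosh (l n / 2) * Real.cosh (ω₁ n / 2)) /
        (Real.sinh (l n / 2) * Real.sinh (ω₁ n / 2)))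
    (hpent : ∀ n, Real.cosh (b n / 2) = Real.sinh (d n) * Real.sinh (ω₁ n / 2)) :
    ∃ C : ℝ, ∀ n, |b n - 2 * Real.log (1 / l n) - max (ω₁ n) (ω₂ n)| ≤ C := by
  obtain ⟨K, hK⟩ := hl0.bddAbove_range
  exact ⟨K + 6 * Real.log 2, fun n ↦
    (self_perpendicular_asymptotics_general (hl n) (hω₁ n) (hω₂ n).le (hb n) (hhex n)
      (hpent n)).trans (by grw [hK ⟨n, rfl⟩])⟩
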